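/- arXiv:1704.02048 — 3 statements merged into one kernel-verified Lean document; each statement's English description precedes it below -/
import Mathlib

section
/- Let n ≥ 2, let T ⊆ ℝⁿ be a nondegenerate simplex with faces G₀, G₁, …, Gₙ, let h > 0, and let u be a normalized Dirichlet eigenfunction on T. Then for every 0 ≤ j ≤ n, ∫_{Gⱼ} |h ∂_{ωⱼ} u|² dS = 2 · Vol_{n-1}(Gⱼ) / (n · Vol_n(T)), where ωⱼ is the outward unit normal to Gⱼ and h ∂_{ωⱼ} u = h ⟨∇u, ωⱼ⟩. -/
open MeasureTheory RealInnerProductSpace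

/-- The (unscaled) Laplacian `Δu = Σⱼ ∂²u/∂xⱼ²`. -/
noncomputable def lap {n : ℕ} (u : EuclideanSpace ℝ (Fin n) → ℝ)
    (x : EuclideanSpace ℝ (Fin n)) : ℝ :=
  ∑ i, fderiv ℝ (fun y => fderiv ℝ u y (EuclideanSpace.single i 1)) x
    (EuclideanSpace.single i 1)

/-!
On a simplex with vertices `b i` and barycentric coordinates with linear parts `ℓ i`, integrating
along an edge `b j - b i` relates the average of a directional derivative over the simplex to the
averages of the function over the two facets opposite to the ends of the edge. Summed over the
edges at one vertex, this gives the divergence theorem in averaged form: with `n = dim - 1`, the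
average of `div V` is `-(n + 1)` times the sum over the facets of the averages of `ℓ i (V)`.

Apply it to the Rellich field of `u` centered at the vertex `b j`. Its divergence is `2u²`. On a
facet `u` vanishes, so `∇u` is normal and the flux density is `h²|∇u|² ℓ i (x - b j)`, which is `0`
unless `i = j`, because `b j` lies in every other facet, and is `-h²|∇u|²` for `i = j`. Hence
`n + 1` times the average of `h²|∇u|²` over the facet opposite to `b j` equals twice the average
of `u²` over the simplex.
-/

open scoped Gradient Laplacian

section Average

variable {F : Type*} [NormedAddCommGroup F] [NormedSpace ℝ F]

lemma setAverage_finsetSum {α ι : Type*} [MeasurableSpace α] {μ : Measure α} {s : Set α}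
    (t : Finset ι) {f : ι → α → F} (hf : ∀ i ∈ t, IntegrableOn (f i) s μ) :
    ⨍ x in s, ∑ i ∈ t, f i x ∂μ = ∑ i ∈ t, ⨍ x in s, f i x ∂μ :=
  integral_finsetSum t fun i hi => Integrable.to_average (hf i hi)

lemma setAverage_map_image {α β : Type*} [MeasurableSpace α] [MeasurableSpace β] {ψ : α → β}
    (hψ : MeasurableEmbedding ψ) (μ : Measure α) (s : Set α) (f : β → F) :
    ⨍ y in ψ '' s, f y ∂μ.map ψ = ⨍ x in s, f (ψ x) ∂μ := by
  rw [average, average, hψ.restrict_map, Set.preimage_image_eq s hψ.injective,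
    Measure.map_apply hψ.measurable .univ, Set.preimage_univ, ← Measure.map_smul, hψ.integral_map]

lemma setAverage_eq_of_isAddHaarMeasure {V : Type*} [NormedAddCommGroup V] [NormedSpace ℝ V]
    [FiniteDimensional ℝ V] [MeasurableSpace V] [BorelSpace V] (μ ν : Measure V)
    [μ.IsAddHaarMeasure] [ν.IsAddHaarMeasure] (s : Set V) (f : V → F) :
    ⨍ x in s, f x ∂μ = ⨍ x in s, f x ∂ν := by
  have hc : (μ.addHaarScalarFactor ν : ℝ) ≠ 0 :=
    NNReal.coe_ne_zero.2 (Measure.addHaarScalarFactor_pos_of_isAddHaarMeasure μ ν).ne'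
  rw [setAverage_eq, setAverage_eq, Measure.isAddLeftInvariant_eq_smul μ ν, Measure.restrict_smul,
    integral_smul_nnreal_measure, measureReal_nnreal_smul_apply, NNReal.smul_def, smul_smul,
    mul_inv_rev, inv_mul_cancel_right₀ hc]

lemma setAverage_hausdorffMeasure_image_affineMap {V E : Type*}
    [NormedAddCommGroup V] [NormedSpace ℝ V] [FiniteDimensional ℝ V] [MeasurableSpace V]
    [BorelSpace V] [NormedAddCommGroup E] [NormedSpace ℝ E] [MeasurableSpace E] [BorelSpace E]
    (ν : Measure V) [ν.IsAddHaarMeasure] {φ : V →ᵃ[ℝ] E} (hφ : Function.Injective φ)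
    (s : Set V) (f : E → F) :
    ⨍ x in φ '' s, f x ∂μH[Module.finrank ℝ V] = ⨍ v in s, f (φ v) ∂ν := by
  have hφ_linear : Function.Injective φ.linear := φ.linear_injective_iff.2 hφ
  set W := φ.linear.range
  let e : V ≃L[ℝ] W := (LinearEquiv.ofInjective φ.linear hφ_linear).toContinuousLinearEquiv
  let ψ : W → E := fun w => w + φ 0
  have hψ_isometry : Isometry ψ := (isometry_add_right (φ 0)).comp isometry_subtype_coe
  have hψ : MeasurableEmbedding ψ := hψ_isometry.isClosedEmbedding.measurableEmbedding
  have hφ_eq (v : V) : φ v = ψ (e v) := congrFun φ.decomp v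
  have himage : φ '' s = ψ '' (e '' s) := by simp_rw [Set.image_image, hφ_eq]
  have : (ν.map e).IsAddHaarMeasure := e.isAddHaarMeasure_map ν
  calc ⨍ x in φ '' s, f x ∂μH[Module.finrank ℝ V]
      = ⨍ x in ψ '' (e '' s), f x ∂(μH[Module.finrank ℝ W] : Measure W).map ψ := by
        rw [hψ_isometry.map_hausdorffMeasure (.inl (Nat.cast_nonneg _)),
          Measure.restrict_restrict_of_subset (Set.image_subset_range _ _), himage,
          e.toLinearEquiv.finrank_eq]
    _ = ⨍ w in e '' s, f (ψ w) ∂ν.map e := by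
        rw [setAverage_map_image hψ, setAverage_eq_of_isAddHaarMeasure _ (ν.map e)]
    _ = ⨍ v in s, f (φ v) ∂ν := by
        simp_rw [hφ_eq]
        exact setAverage_map_image e.toHomeomorph.measurableEmbedding ν s (f ∘ ψ)

end Average

/-- The solid simplex with vertices the origin and the standard basis vectors. -/
def cornerSimplex (n : ℕ) : Set (Fin n → ℝ) := {s | 0 ≤ s ∧ ∑ k, s k ≤ 1}

section CornerSimplex

variable {F : Type*} [NormedAddCommGroup F] [NormedSpace ℝ F]

lemma convex_cornerSimplex (n : ℕ) : Convex ℝ (cornerSimplex n) :=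
  (convex_Ici 0).inter <| convex_halfSpace_le
    (f := fun s : Fin n → ℝ => ∑ k, s k)
    ⟨by simp [Finset.sum_add_distrib], by simp [Finset.mul_sum]⟩ 1

lemma isCompact_cornerSimplex (n : ℕ) : IsCompact (cornerSimplex n) := by
  have hclosed : IsClosed (cornerSimplex n) :=
    isClosed_Ici.inter <| isClosed_le (f := fun s : Fin n → ℝ => ∑ k, s k)
      (by fun_prop) continuous_const
  refine (isCompact_Icc (a := (0 : Fin n → ℝ)) (b := 1)).of_isClosed_subset hclosed ?_
  exact fun s hs => ⟨hs.1, fun k =>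
    (Finset.single_le_sum (fun i _ => hs.1 i) (Finset.mem_univ k)).trans hs.2⟩

lemma cons_mem_cornerSimplex {n : ℕ} {t : ℝ} {s : Fin n → ℝ} :
    Fin.cons (α := fun _ => ℝ) t s ∈ cornerSimplex (n + 1) ↔
      s ∈ cornerSimplex n ∧ t ∈ Set.Icc 0 (1 - ∑ k, s k) := by
  simp only [cornerSimplex, Set.mem_ofPred_eq, Pi.le_def, Fin.forall_fin_succ, Fin.sum_univ_succ,
    Fin.cons_zero, Fin.cons_succ, Pi.zero_apply, Set.mem_Icc]
  constructor
  · rintro ⟨⟨ht, hs⟩, hsum⟩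
    exact ⟨⟨hs, by linarith⟩, ht, by linarith⟩
  · rintro ⟨⟨hs, -⟩, ht, hsum⟩
    exact ⟨⟨ht, hs⟩, by linarith⟩

lemma volume_real_cornerSimplex_pos (n : ℕ) : 0 < volume.real (cornerSimplex n) := by
  have hcube : Set.Icc (0 : Fin n → ℝ) (fun _ => 1 / (n + 1)) ⊆ cornerSimplex n := by
    refine fun s hs => ⟨hs.1, ?_⟩
    calc ∑ k, s k ≤ ∑ _k : Fin n, (1 / (n + 1) : ℝ) := Finset.sum_le_sum fun k _ => hs.2 k
      _ = n / (n + 1) := by simp [div_eq_mul_inv]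
      _ ≤ 1 := (div_le_one (by positivity)).2 (by linarith)
  refine ENNReal.toReal_pos (ne_of_gt ?_) (isCompact_cornerSimplex n).measure_ne_top
  refine lt_of_lt_of_le ?_ (measure_mono hcube)
  simp only [Real.volume_Icc_pi, Pi.zero_apply, sub_zero, Finset.prod_const]
  exact ENNReal.pow_pos (ENNReal.ofReal_pos.2 (by positivity)) _

lemma integral_cornerSimplex_succ {n : ℕ} {g : (Fin (n + 1) → ℝ) → F}
    (hg : ContinuousOn g (cornerSimplex (n + 1))) :
    ∫ s in cornerSimplex (n + 1), g s =
      ∫ s in cornerSimplex n, ∫ t in (0)..(1 - ∑ k, s k), g (Fin.cons t s) := by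
  have hS := (isCompact_cornerSimplex (n + 1)).measurableSet
  let e := (MeasurableEquiv.piFinSuccAbove (fun _ : Fin (n + 1) => ℝ) 0).symm
  have he : MeasurePreserving e :=
    (volume_preserving_piFinSuccAbove (fun _ : Fin (n + 1) => ℝ) 0).symm
  have he_cons : ⇑e = fun z => Fin.cons z.1 z.2 := funext fun z => Fin.insertNth_zero' z.1 z.2
  have hint : Integrable ((cornerSimplex (n + 1)).indicator g) :=
    (integrable_indicator_iff hS).2 (hg.integrableOn_compact (isCompact_cornerSimplex (n + 1)))
  have hint_cons : Integrable (fun z : ℝ × (Fin n → ℝ) =>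
      (cornerSimplex (n + 1)).indicator g (Fin.cons z.1 z.2)) (volume.prod volume) := by
    have := he.integrable_comp_of_integrable hint
    rwa [he_cons] at this
  have hslice (s : Fin n → ℝ) (t : ℝ) :
      (cornerSimplex (n + 1)).indicator g (Fin.cons t s) = (cornerSimplex n).indicator
        (fun s => (Set.Icc 0 (1 - ∑ k, s k)).indicator (fun t => g (Fin.cons t s)) t) s := by
    by_cases hs : s ∈ cornerSimplex n <;> by_cases ht : t ∈ Set.Icc 0 (1 - ∑ k, s k) <;>
      simp [Set.indicator, cons_mem_cornerSimplex, hs, ht]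
  calc ∫ s in cornerSimplex (n + 1), g s
      = ∫ z : ℝ × (Fin n → ℝ), (cornerSimplex (n + 1)).indicator g (Fin.cons z.1 z.2) := by
        rw [← integral_indicator hS, ← he.integral_comp', he_cons]
    _ = ∫ s, ∫ t, (cornerSimplex (n + 1)).indicator g (Fin.cons t s) :=
        integral_prod_symm _ hint_cons
    _ = ∫ s in cornerSimplex n, ∫ t in (0)..(1 - ∑ k, s k), g (Fin.cons t s) := by
        rw [← integral_indicator (isCompact_cornerSimplex n).measurableSet]
        refine integral_congr_ae (.of_forall fun s => ?_)
        simp_rw [hslice]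
        by_cases hs : s ∈ cornerSimplex n
        · simp only [Set.indicator_of_mem hs, integral_indicator measurableSet_Icc]
          rw [intervalIntegral.integral_of_le (sub_nonneg.2 hs.2), integral_Icc_eq_integral_Ioc]
        · simp only [Set.indicator_of_notMem hs, integral_zero]

lemma integral_cornerSimplex_deriv [CompleteSpace F] {n : ℕ} {g g' : (Fin (n + 1) → ℝ) → F}
    (hg : ∀ s ∈ cornerSimplex n, ∀ t ∈ Set.Icc 0 (1 - ∑ k, s k), HasDerivWithinAt
      (fun t => g (Fin.cons t s)) (g' (Fin.cons t s)) (Set.Icc 0 (1 - ∑ k, s k)) t)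
    (hg' : ContinuousOn g' (cornerSimplex (n + 1))) :
    ∫ s in cornerSimplex (n + 1), g' s =
      ∫ s in cornerSimplex n, (g (Fin.cons (1 - ∑ k, s k) s) - g (Fin.cons 0 s)) := by
  rw [integral_cornerSimplex_succ hg']
  refine setIntegral_congr_fun (isCompact_cornerSimplex n).measurableSet fun s hs => ?_
  have hle : 0 ≤ 1 - ∑ k, s k := sub_nonneg.2 hs.2
  refine intervalIntegral.integral_eq_sub_of_hasDerivAt_of_le (f := fun t => g (Fin.cons t s)) hle
    (fun t ht => (hg s hs t ht).continuousWithinAt)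
    (fun t ht => (hg s hs t (Set.Ioo_subset_Icc_self ht)).hasDerivAt (Icc_mem_nhds ht.1 ht.2)) ?_
  refine ContinuousOn.intervalIntegrable_of_Icc hle (hg'.comp ?_ ?_)
  · exact (Continuous.finCons (by fun_prop) (by fun_prop)).continuousOn
  · exact fun t ht => cons_mem_cornerSimplex.2 ⟨hs, ht⟩

end CornerSimplex

/-- The affine parametrization `s ↦ (1 - ∑ k, s k) • q 0 + ∑ k, s k • q (k + 1)` of the affine span
of the points `q 0, …, q n`, which maps `cornerSimplex n` onto their convex hull. -/
noncomputable def cornerMap {E : Type*} [AddCommGroup E] [Module ℝ E] {n : ℕ}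
    (q : Fin (n + 1) → E) : (Fin n → ℝ) →ᵃ[ℝ] E :=
  (Fintype.linearCombination ℝ fun k => q k.succ - q 0).toAffineMap + AffineMap.const ℝ _ (q 0)

section CornerMap

variable {E : Type*} [AddCommGroup E] [Module ℝ E] {n : ℕ}

lemma cornerMap_apply (q : Fin (n + 1) → E) (s : Fin n → ℝ) :
    cornerMap q s = ∑ k, s k • (q k.succ - q 0) + q 0 := by
  simp [cornerMap, Fintype.linearCombination_apply]

lemma cornerMap_eq_sum (q : Fin (n + 1) → E) (s : Fin n → ℝ) :
    cornerMap q s = ∑ k, Fin.cons (α := fun _ => ℝ) (1 - ∑ k, s k) s k • q k := by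
  simp only [cornerMap_apply, Fin.sum_univ_succ, Fin.cons_zero, Fin.cons_succ, smul_sub,
    Finset.sum_sub_distrib, sub_smul, one_smul, Finset.sum_smul]
  abel

lemma cornerMap_cons_zero (q : Fin (n + 2) → E) (s : Fin n → ℝ) :
    cornerMap q (Fin.cons 0 s) = cornerMap (q ∘ Fin.succAbove 1) s := by
  simp [cornerMap_apply, Fin.sum_univ_succ]

lemma cornerMap_cons_one_sub_sum (q : Fin (n + 2) → E) (s : Fin n → ℝ) :
    cornerMap q (Fin.cons (1 - ∑ k, s k) s) = cornerMap (q ∘ Fin.succAbove 0) s := by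
  simp [cornerMap_eq_sum, Fin.sum_univ_succ]

lemma cornerMap_image_cornerSimplex (q : Fin (n + 1) → E) :
    cornerMap q '' cornerSimplex n = convexHull ℝ (Set.range q) := by
  refine subset_antisymm ?_ (convexHull_min ?_ ((convex_cornerSimplex n).affine_image _))
  · rintro _ ⟨s, hs, rfl⟩
    rw [cornerMap_eq_sum]
    refine (convex_convexHull ℝ _).sum_mem (fun k _ => ?_) (by simp [Fin.sum_univ_succ])
      fun k _ => subset_convexHull ℝ _ (Set.mem_range_self k)
    exact Fin.cases (sub_nonneg.2 hs.2) hs.1 k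
  · rintro _ ⟨k, rfl⟩
    refine Fin.cases ⟨0, ⟨le_rfl, by simp⟩, by simp [cornerMap_apply]⟩ (fun k => ?_) k
    refine ⟨Pi.single k 1, ⟨Pi.single_nonneg.2 zero_le_one, by simp⟩, ?_⟩
    simp [cornerMap_apply, Pi.single_apply]

lemma mapsTo_cornerMap (q : Fin (n + 1) → E) :
    Set.MapsTo (cornerMap q) (cornerSimplex n) (convexHull ℝ (Set.range q)) :=
  cornerMap_image_cornerSimplex q ▸ Set.mapsTo_image _ _

lemma cornerMap_injective {q : Fin (n + 1) → E} (hq : AffineIndependent ℝ q) :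
    Function.Injective (cornerMap q) := by
  have hlin : LinearIndependent ℝ fun k : Fin n => q k.succ - q 0 := by
    simpa [Function.comp_def, finSuccAboveEquiv] using
      ((affineIndependent_iff_linearIndependent_vsub ℝ q 0).1 hq).comp _
        (finSuccAboveEquiv 0).injective
  have hinj := linearIndependent_iff_injective_fintypeLinearCombination.1 hlin
  exact fun s t hst => hinj (by simpa [cornerMap] using hst)

end CornerMap

section NormedCornerMap

variable {E : Type*} [NormedAddCommGroup E] [NormedSpace ℝ E] {n : ℕ}

lemma hasDerivAt_cornerMap_cons (q : Fin (n + 2) → E) (s : Fin n → ℝ) (t : ℝ) :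
    HasDerivAt (fun t => cornerMap q (Fin.cons t s)) (q 1 - q 0) t := by
  simpa [cornerMap_apply, Fin.sum_univ_succ] using (hasDerivAt_id t).smul_const (q 1 - q 0)

lemma continuous_cornerMap (q : Fin (n + 1) → E) : Continuous (cornerMap q) :=
  (cornerMap q).continuous_of_finiteDimensional

end NormedCornerMap

/-- The facet opposite to the vertex `p i` of the simplex with vertices `p 0, …, p n`. -/
def oppositeFacet {E : Type*} [AddCommGroup E] [Module ℝ E] {n : ℕ} (p : Fin (n + 1) → E)
    (i : Fin (n + 1)) : Set E :=
  convexHull ℝ (p '' {i}ᶜ)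

section OppositeFacet

variable {E : Type*} [AddCommGroup E] [Module ℝ E] {n : ℕ}

lemma oppositeFacet_eq_convexHull_range (p : Fin (n + 2) → E) (i : Fin (n + 2)) :
    oppositeFacet p i = convexHull ℝ (Set.range (p ∘ i.succAbove)) := by
  rw [oppositeFacet, Set.range_comp, Fin.range_succAbove]

lemma oppositeFacet_comp_perm (p : Fin (n + 1) → E) (σ : Equiv.Perm (Fin (n + 1)))
    (i : Fin (n + 1)) : oppositeFacet (p ∘ σ) i = oppositeFacet p (σ i) := by
  rw [oppositeFacet, oppositeFacet, Set.image_comp, Set.image_compl_eq σ.bijective,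
    Set.image_singleton]

lemma oppositeFacet_subset_convexHull_range (p : Fin (n + 1) → E) (i : Fin (n + 1)) :
    oppositeFacet p i ⊆ convexHull ℝ (Set.range p) :=
  convexHull_mono (Set.image_subset_range _ _)

lemma mem_oppositeFacet_of_ne (p : Fin (n + 1) → E) {i k : Fin (n + 1)} (hki : k ≠ i) :
    p k ∈ oppositeFacet p i :=
  subset_convexHull ℝ _ ⟨k, hki, rfl⟩

end OppositeFacet

section Simplex

variable {E F : Type*} [NormedAddCommGroup E] [NormedSpace ℝ E]
  [NormedAddCommGroup F] [NormedSpace ℝ F] {n : ℕ}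

lemma isCompact_oppositeFacet (p : Fin (n + 1) → E) (i : Fin (n + 1)) :
    IsCompact (oppositeFacet p i) :=
  ((Set.toFinite _).image p).isCompact_convexHull ℝ

variable [MeasurableSpace E] [BorelSpace E]

lemma setAverage_convexHull_range {p : Fin (n + 1) → E} (hp : AffineIndependent ℝ p) (f : E → F) :
    ⨍ x in convexHull ℝ (Set.range p), f x ∂μH[n] =
      ⨍ s in cornerSimplex n, f (cornerMap p s) := by
  simpa [cornerMap_image_cornerSimplex] using
    setAverage_hausdorffMeasure_image_affineMap volume (cornerMap_injective hp) (cornerSimplex n) f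

lemma setAverage_oppositeFacet {p : Fin (n + 2) → E} (hp : AffineIndependent ℝ p)
    (i : Fin (n + 2)) (f : E → F) :
    ⨍ x in oppositeFacet p i, f x ∂μH[n] =
      ⨍ s in cornerSimplex n, f (cornerMap (p ∘ i.succAbove) s) := by
  rw [oppositeFacet_eq_convexHull_range]
  exact setAverage_convexHull_range (hp.comp_embedding i.succAboveEmb) f

lemma hausdorffMeasure_real_oppositeFacet_ne_zero {p : Fin (n + 2) → E}
    (hp : AffineIndependent ℝ p) (i : Fin (n + 2)) :
    (μH[n] : Measure E).real (oppositeFacet p i) ≠ 0 := by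
  intro hzero
  have hone := setAverage_oppositeFacet hp i fun _ => (1 : ℝ)
  simp [setAverage_eq, hzero, (volume_real_cornerSimplex_pos n).ne'] at hone

lemma hausdorffMeasure_oppositeFacet_ne_top {p : Fin (n + 2) → E}
    (hp : AffineIndependent ℝ p) (i : Fin (n + 2)) : μH[n] (oppositeFacet p i) ≠ ⊤ := fun htop =>
  hausdorffMeasure_real_oppositeFacet_ne_zero hp i (by simp [Measure.real, htop])

lemma integrableOn_oppositeFacet {G : Type*} [NormedAddCommGroup G] {p : Fin (n + 2) → E}
    (hp : AffineIndependent ℝ p) {i : Fin (n + 2)} {f : E → G}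
    (hf : ContinuousOn f (oppositeFacet p i)) :
    IntegrableOn f (oppositeFacet p i) μH[n] :=
  hf.integrableOn_of_subset_isCompact (isCompact_oppositeFacet p i)
    (isCompact_oppositeFacet p i).measurableSet subset_rfl
    (hausdorffMeasure_oppositeFacet_ne_top hp i)

lemma setAverage_fderiv_edge_zero_one [CompleteSpace F] {p : Fin (n + 2) → E}
    (hp : AffineIndependent ℝ p) {f : E → F} {f' : E → E →L[ℝ] F}
    (hf : ∀ x ∈ convexHull ℝ (Set.range p),
      HasFDerivWithinAt f (f' x) (convexHull ℝ (Set.range p)) x)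
    (hf' : ContinuousOn f' (convexHull ℝ (Set.range p))) :
    ⨍ x in convexHull ℝ (Set.range p), f' x (p 1 - p 0) ∂μH[(n + 1 : ℕ)] =
      (volume.real (cornerSimplex n) / volume.real (cornerSimplex (n + 1))) •
        (⨍ x in oppositeFacet p 0, f x ∂μH[n] - ⨍ x in oppositeFacet p 1, f x ∂μH[n]) := by
  have hmem {s t} (hs : s ∈ cornerSimplex n) (ht : t ∈ Set.Icc 0 (1 - ∑ k, s k)) :
      cornerMap p (Fin.cons t s) ∈ convexHull ℝ (Set.range p) :=
    mapsTo_cornerMap p (cons_mem_cornerSimplex.2 ⟨hs, ht⟩)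
  have hfacet (i : Fin (n + 2)) :
      IntegrableOn (fun s => f (cornerMap (p ∘ i.succAbove) s)) (cornerSimplex n) := by
    have hf_cont : ContinuousOn f (convexHull ℝ (Set.range p)) :=
      fun x hx => (hf x hx).continuousWithinAt
    refine ContinuousOn.integrableOn_compact (isCompact_cornerSimplex n) <|
      hf_cont.comp (continuous_cornerMap _).continuousOn fun s hs => ?_
    exact convexHull_mono (Set.range_comp_subset_range _ _) (mapsTo_cornerMap _ hs)
  have hFTC := integral_cornerSimplex_deriv (g := fun s => f (cornerMap p s))
    (g' := fun s => f' (cornerMap p s) (p 1 - p 0))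
    (fun s hs t ht => (hf _ (hmem hs ht)).comp_hasDerivWithinAt t
      (hasDerivAt_cornerMap_cons p s t).hasDerivWithinAt fun t ht => hmem hs ht)
    ((hf'.comp (continuous_cornerMap p).continuousOn (mapsTo_cornerMap p)).clm_apply
      continuousOn_const)
  simp only [cornerMap_cons_zero, cornerMap_cons_one_sub_sum] at hFTC
  rw [setAverage_convexHull_range hp, setAverage_oppositeFacet hp, setAverage_oppositeFacet hp,
    setAverage_eq, setAverage_eq, setAverage_eq, hFTC, integral_sub (hfacet 0) (hfacet 1),
    ← smul_sub, smul_smul, div_mul_eq_mul_div,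
    mul_inv_cancel₀ (volume_real_cornerSimplex_pos n).ne', one_div]

lemma setAverage_fderiv_edge_eq_ratio_smul [CompleteSpace F] {p : Fin (n + 2) → E}
    (hp : AffineIndependent ℝ p) {f : E → F} {f' : E → E →L[ℝ] F}
    (hf : ∀ x ∈ convexHull ℝ (Set.range p),
      HasFDerivWithinAt f (f' x) (convexHull ℝ (Set.range p)) x)
    (hf' : ContinuousOn f' (convexHull ℝ (Set.range p))) (i j : Fin (n + 2)) :
    ⨍ x in convexHull ℝ (Set.range p), f' x (p j - p i) ∂μH[(n + 1 : ℕ)] =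
      (volume.real (cornerSimplex n) / volume.real (cornerSimplex (n + 1))) •
        (⨍ x in oppositeFacet p i, f x ∂μH[n] - ⨍ x in oppositeFacet p j, f x ∂μH[n]) := by
  obtain rfl | hij := eq_or_ne i j
  · simp
  obtain ⟨σ, hσ⟩ := Equiv.Perm.exists_extending_pair ![(0 : Fin (n + 2)), 1] ![i, j]
    (by simp) (by simpa using hij)
  have hσ_zero : σ 0 = i := hσ 0
  have hσ_one : σ 1 = j := hσ 1
  have hrange : Set.range (p ∘ σ) = Set.range p := σ.surjective.range_comp p
  have hedge := setAverage_fderiv_edge_zero_one (p := p ∘ σ) (hp.comp_embedding σ.toEmbedding)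
    (hrange.symm ▸ hf) (hrange.symm ▸ hf')
  simpa only [hrange, oppositeFacet_comp_perm, Function.comp_apply, hσ_zero, hσ_one] using hedge

end Simplex

section AffineBasis

variable {E : Type*} [AddCommGroup E] [Module ℝ E] {n : ℕ}
  (b : AffineBasis (Fin (n + 1)) ℝ E) {i : Fin (n + 1)} {x : E}

lemma coord_linear_sub (i : Fin (n + 1)) (x y : E) :
    (b.coord i).linear (x - y) = b.coord i x - b.coord i y :=
  (b.coord i).linearMap_vsub x y

lemma coord_eq_zero_of_mem_oppositeFacet (hx : x ∈ oppositeFacet b i) : b.coord i x = 0 := by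
  have hconvex : Convex ℝ (b.coord i ⁻¹' {0}) := (convex_singleton 0).affine_preimage _
  refine convexHull_min ?_ hconvex hx
  rintro _ ⟨k, hk, rfl⟩
  exact b.coord_apply_ne (Ne.symm hk)

lemma coord_linear_eq_sub (i : Fin (n + 1)) (v : E) :
    (b.coord i).linear v = b.coord i v - b.coord i 0 := by
  rw [← coord_linear_sub, sub_zero]

lemma sum_coord_linear (v : E) : ∑ i, (b.coord i).linear v = 0 := by
  simp only [coord_linear_eq_sub, Finset.sum_sub_distrib, b.sum_coord_apply_eq_one, sub_self]

lemma sum_coord_linear_smul_sub (v x : E) : ∑ i, (b.coord i).linear v • (b i - x) = v := by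
  simp only [smul_sub, Finset.sum_sub_distrib, ← Finset.sum_smul, sum_coord_linear, zero_smul,
    sub_zero]
  simp only [coord_linear_eq_sub, sub_smul, Finset.sum_sub_distrib,
    b.linear_combination_coord_eq_self, sub_zero]

lemma trace_eq_sum_coord_linear (A : E →ₗ[ℝ] E) (x : E) :
    LinearMap.trace ℝ E A = ∑ i, (b.coord i).linear (A (b i - x)) := by
  have hA : A = ∑ i, (b.coord i).linear.smulRight (A (b i - x)) := by
    ext v
    conv_lhs => rw [← sum_coord_linear_smul_sub b v x]
    simp
  have : FiniteDimensional ℝ E := b.finiteDimensional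
  conv_lhs => rw [hA]
  simp

end AffineBasis

/-- The ratio is computed from the barycentric coordinates of the centroids of the facets. -/
lemma volume_real_cornerSimplex_div_succ (n : ℕ) :
    volume.real (cornerSimplex n) / volume.real (cornerSimplex (n + 1)) = n + 1 := by
  obtain ⟨b⟩ := AffineBasis.exists_affineBasis_of_finiteDimensional (k := ℝ)
    (ι := Fin (n + 2)) (P := Fin (n + 1) → ℝ) (by simp)
  set r := volume.real (cornerSimplex n) / volume.real (cornerSimplex (n + 1))
  let c (i : Fin (n + 2)) : Fin (n + 1) → ℝ := ⨍ x in oppositeFacet b i, x ∂μH[n]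
  have hc_mem (i : Fin (n + 2)) : c i ∈ oppositeFacet b i :=
    (convex_convexHull ℝ _).set_average_mem (isCompact_oppositeFacet _ i).isClosed
      (fun h => hausdorffMeasure_real_oppositeFacet_ne_zero b.ind i (by simp [Measure.real, h]))
      (hausdorffMeasure_oppositeFacet_ne_top b.ind i)
      (ae_restrict_mem (isCompact_oppositeFacet _ i).measurableSet)
      (integrableOn_oppositeFacet b.ind continuousOn_id)
  have hcoord (i : Fin (n + 2)) : b.coord i (c i) = 0 :=
    coord_eq_zero_of_mem_oppositeFacet b (hc_mem i)
  have hedge (j : Fin (n + 2)) : b j - b 0 = r • (c 0 - c j) := by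
    have := setAverage_fderiv_edge_eq_ratio_smul b.ind (fun x _ => hasFDerivWithinAt_id x _)
      continuousOn_const 0 j
    rwa [setAverage_convexHull_range b.ind, setAverage_eq, setIntegral_const, smul_smul,
      inv_mul_cancel₀ (volume_real_cornerSimplex_pos (n + 1)).ne', one_smul] at this
  have hr (j : Fin (n + 1)) : r * b.coord j.succ (c 0) = 1 := by
    have := congrArg (b.coord j.succ).linear (hedge j.succ)
    rw [map_smul, coord_linear_sub, coord_linear_sub, hcoord] at this
    simpa using this.symm
  have hsum : ∑ j : Fin (n + 1), b.coord j.succ (c 0) = 1 := by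
    have := b.sum_coord_apply_eq_one (c 0)
    rwa [Fin.sum_univ_succ, hcoord, zero_add] at this
  calc r = ∑ j : Fin (n + 1), r * b.coord j.succ (c 0) := by rw [← Finset.mul_sum, hsum, mul_one]
    _ = n + 1 := by simp [hr]

/-- The divergence of a vector field, as the trace of its derivative. -/
noncomputable def divergence {E : Type*} [NormedAddCommGroup E] [NormedSpace ℝ E] (V : E → E)
    (x : E) : ℝ :=
  LinearMap.trace ℝ E (fderiv ℝ V x)

section DivergenceTheorem

variable {E F : Type*} [NormedAddCommGroup E] [NormedSpace ℝ E] [MeasurableSpace E] [BorelSpace E]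
  {n : ℕ} (b : AffineBasis (Fin (n + 2)) ℝ E) (μ : Measure E) [μ.IsAddHaarMeasure]

lemma setAverage_fderiv_edge [NormedAddCommGroup F] [NormedSpace ℝ F] [CompleteSpace F]
    {f : E → F} {f' : E → E →L[ℝ] F}
    (hf : ∀ x ∈ convexHull ℝ (Set.range b),
      HasFDerivWithinAt f (f' x) (convexHull ℝ (Set.range b)) x)
    (hf' : ContinuousOn f' (convexHull ℝ (Set.range b))) (i j : Fin (n + 2)) :
    ⨍ x in convexHull ℝ (Set.range b), f' x (b j - b i) ∂μ =
      (n + 1 : ℝ) •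
        (⨍ x in oppositeFacet b i, f x ∂μH[n] - ⨍ x in oppositeFacet b j, f x ∂μH[n]) := by
  have : FiniteDimensional ℝ E := b.finiteDimensional
  have hdim : n + 1 = Module.finrank ℝ E := by simpa using b.card_eq_finrank_add_one
  rw [← volume_real_cornerSimplex_div_succ,
    ← setAverage_fderiv_edge_eq_ratio_smul b.ind hf hf' i j, hdim,
    setAverage_eq_of_isAddHaarMeasure μ μH[Module.finrank ℝ E]]

theorem setAverage_divergence {V : E → E}
    (hV : ∀ x ∈ convexHull ℝ (Set.range b), DifferentiableAt ℝ V x)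
    (hV' : ContinuousOn (fderiv ℝ V) (convexHull ℝ (Set.range b))) :
    ⨍ x in convexHull ℝ (Set.range b), divergence V x ∂μ =
      -(n + 1) * ∑ i, ⨍ x in oppositeFacet b i, (b.coord i).linear (V x) ∂μH[n] := by
  have : FiniteDimensional ℝ E := b.finiteDimensional
  let l (i : Fin (n + 2)) : E →L[ℝ] ℝ := (b.coord i).linear.toContinuousLinearMap
  have hcompact : IsCompact (convexHull ℝ (Set.range b)) :=
    (Set.finite_range b).isCompact_convexHull ℝ
  have hderiv_cont (i : Fin (n + 2)) :
      ContinuousOn (fun x => l i ∘L fderiv ℝ V x) (convexHull ℝ (Set.range b)) :=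
    continuousOn_const.clm_comp hV'
  have hedge (i : Fin (n + 2)) := setAverage_fderiv_edge b μ (f := fun x => l i (V x))
    (fun x hx => ((l i).hasFDerivAt.comp x (hV x hx).hasFDerivAt).hasFDerivWithinAt)
    (hderiv_cont i) 0 i
  have hfacet_zero : ∑ i, ⨍ x in oppositeFacet b 0, l i (V x) ∂μH[n] = 0 := by
    have hV_cont : ContinuousOn V (oppositeFacet b 0) := fun x hx =>
      (hV x (oppositeFacet_subset_convexHull_range b 0 hx)).continuousAt.continuousWithinAt
    rw [← setAverage_finsetSum (f := fun i x => l i (V x)) _ fun i _ =>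
      integrableOn_oppositeFacet b.ind ((l i).continuous.comp_continuousOn hV_cont)]
    simp only [l, LinearMap.coe_toContinuousLinearMap', sum_coord_linear, average_zero]
  calc ⨍ x in convexHull ℝ (Set.range b), divergence V x ∂μ
      = ∑ i, ⨍ x in convexHull ℝ (Set.range b), (l i ∘L fderiv ℝ V x) (b i - b 0) ∂μ := by
        rw [← setAverage_finsetSum _ fun i _ =>
          ((hderiv_cont i).clm_apply continuousOn_const).integrableOn_compact hcompact]
        simp only [divergence, trace_eq_sum_coord_linear b _ (b 0)]
        rfl
    _ = -(n + 1) * ∑ i, ⨍ x in oppositeFacet b i, (b.coord i).linear (V x) ∂μH[n] := by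
        simp only [hedge, smul_eq_mul]
        rw [← Finset.mul_sum, Finset.sum_sub_distrib, hfacet_zero, zero_sub, neg_mul, mul_neg]
        rfl

end DivergenceTheorem

section Divergence

variable {E : Type*} [NormedAddCommGroup E] [NormedSpace ℝ E] {V W : E → E} {f : E → ℝ} {x : E}

lemma divergence_add (hV : DifferentiableAt ℝ V x) (hW : DifferentiableAt ℝ W x) :
    divergence (fun y => V y + W y) x = divergence V x + divergence W x := by
  simp [divergence, fderiv_fun_add hV hW]

lemma divergence_smul [FiniteDimensional ℝ E] (hf : DifferentiableAt ℝ f x)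
    (hV : DifferentiableAt ℝ V x) :
    divergence (fun y => f y • V y) x = f x * divergence V x + fderiv ℝ f x (V x) := by
  simp [divergence, fderiv_fun_smul hf hV]

lemma divergence_sub_const [FiniteDimensional ℝ E] (a x : E) :
    divergence (fun y => y - a) x = Module.finrank ℝ E := by
  rw [divergence, fderiv_sub_const, fderiv_fun_id, ContinuousLinearMap.coe_id, LinearMap.trace_id]

end Divergence

section Gradient

variable {E : Type*} [NormedAddCommGroup E] [InnerProductSpace ℝ E] [CompleteSpace E]
  {u : E → ℝ} {x : E}

lemma contDiffAt_gradient (hu : ContDiffAt ℝ 2 u x) : ContDiffAt ℝ 1 (∇ u) x :=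
  (InnerProductSpace.toDual ℝ E).symm.contDiff.contDiffAt.comp x (hu.fderiv_right le_rfl)

lemma inner_fderiv_gradient (u : E → ℝ) (x v w : E) :
    ⟪fderiv ℝ (∇ u) x v, w⟫ = fderiv ℝ (fderiv ℝ u) x v w := by
  have hcomp : fderiv ℝ (∇ u) x v =
      (InnerProductSpace.toDual ℝ E).symm (fderiv ℝ (fderiv ℝ u) x v) :=
    congrArg (· v) (InnerProductSpace.toDual ℝ E).symm.toContinuousLinearEquiv.comp_fderiv
  rw [hcomp, InnerProductSpace.toDual_symm_apply]

lemma inner_fderiv_gradient_comm (hu : ContDiffAt ℝ 2 u x) (v w : E) :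
    ⟪fderiv ℝ (∇ u) x v, w⟫ = ⟪fderiv ℝ (∇ u) x w, v⟫ := by
  rw [inner_fderiv_gradient, inner_fderiv_gradient]
  exact (hu.isSymmSndFDerivAt (by simp)).eq v w

lemma fderiv_inner_gradient_sub (hu : ContDiffAt ℝ 2 u x) (a v : E) :
    fderiv ℝ (fun y => ⟪∇ u y, y - a⟫) x v = ⟪fderiv ℝ (∇ u) x v, x - a⟫ + ⟪∇ u x, v⟫ := by
  rw [fderiv_inner_apply ℝ ((contDiffAt_gradient hu).differentiableAt one_ne_zero) (by fun_prop)]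
  simp [fderiv_sub_const, add_comm]

lemma fderiv_norm_gradient_sq (hu : ContDiffAt ℝ 2 u x) (v : E) :
    fderiv ℝ (fun y => ‖∇ u y‖ ^ 2) x v = 2 * ⟪fderiv ℝ (∇ u) x (∇ u x), v⟫ := by
  rw [((contDiffAt_gradient hu).differentiableAt one_ne_zero).hasFDerivAt.norm_sq.fderiv,
    inner_fderiv_gradient_comm hu]
  simp

lemma divergence_gradient [FiniteDimensional ℝ E] (u : E → ℝ) (x : E) :
    divergence (∇ u) x = Δ u x := by
  rw [InnerProductSpace.laplacian_eq_iteratedFDeriv_stdOrthonormalBasis, divergence,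
    LinearMap.trace_eq_sum_inner _ (stdOrthonormalBasis ℝ E)]
  refine Finset.sum_congr rfl fun i _ => ?_
  rw [iteratedFDeriv_two_apply, real_inner_comm]
  exact inner_fderiv_gradient u x _ _

end Gradient

/-- The Rellich vector field of `u` centered at `a`. It combines the field
`2⟪∇u, y - a⟫∇u - ‖∇u‖²(y - a)` of Rellich's identity with `u∇u` and `u²(y - a)` so that its
divergence is `2u²` whenever `-cΔu = u`; the factor `c` avoids a division. -/
noncomputable def rellichField {E : Type*} [NormedAddCommGroup E] [InnerProductSpace ℝ E]
    [CompleteSpace E] (c : ℝ) (u : E → ℝ) (a y : E) : E :=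
  (c * (2 * ⟪∇ u y, y - a⟫ + (Module.finrank ℝ E - 2) * u y)) • ∇ u y +
    (u y ^ 2 - c * ‖∇ u y‖ ^ 2) • (y - a)

section Rellich

variable {E : Type*} [NormedAddCommGroup E] [InnerProductSpace ℝ E] {c : ℝ} {u : E → ℝ} {x : E}

lemma contDiffAt_rellichField [CompleteSpace E] (hu : ContDiffAt ℝ 2 u x) (c : ℝ) (a : E) :
    ContDiffAt ℝ 1 (rellichField c u a) x := by
  have hu_one : ContDiffAt ℝ 1 u x := hu.of_le one_le_two
  have hgrad : ContDiffAt ℝ 1 (∇ u) x := contDiffAt_gradient hu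
  have hinner : ContDiffAt ℝ 1 (fun y => ⟪∇ u y, y - a⟫) x := hgrad.inner ℝ (by fun_prop)
  have hnorm : ContDiffAt ℝ 1 (fun y => ‖∇ u y‖ ^ 2) x := hgrad.norm_sq ℝ
  unfold rellichField
  fun_prop

lemma divergence_rellichField [FiniteDimensional ℝ E] (hu : ContDiffAt ℝ 2 u x)
    (heig : -c * Δ u x = u x) (a : E) : divergence (rellichField c u a) x = 2 * u x ^ 2 := by
  have hu_diff : DifferentiableAt ℝ u x := hu.differentiableAt two_ne_zero
  have hgrad : DifferentiableAt ℝ (∇ u) x := (contDiffAt_gradient hu).differentiableAt one_ne_zero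
  have hinner : DifferentiableAt ℝ (fun y => ⟪∇ u y, y - a⟫) x := hgrad.inner ℝ (by fun_prop)
  have hnorm : DifferentiableAt ℝ (fun y => ‖∇ u y‖ ^ 2) x := hgrad.norm_sq ℝ
  have hcoeff_grad :
      fderiv ℝ (fun y => c * (2 * ⟪∇ u y, y - a⟫ + (Module.finrank ℝ E - 2) * u y)) x (∇ u x) =
        c * (2 * (⟪fderiv ℝ (∇ u) x (∇ u x), x - a⟫ + ‖∇ u x‖ ^ 2) +
          (Module.finrank ℝ E - 2) * ‖∇ u x‖ ^ 2) := by
    rw [fderiv_const_mul (by fun_prop), fderiv_fun_add (by fun_prop) (by fun_prop),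
      fderiv_const_mul hinner, fderiv_const_mul hu_diff]
    simp [fderiv_inner_gradient_sub hu, ← inner_gradient_left, mul_add]
  have hcoeff_radial : fderiv ℝ (fun y => u y ^ 2 - c * ‖∇ u y‖ ^ 2) x (x - a) =
      2 * u x * ⟪∇ u x, x - a⟫ - c * (2 * ⟪fderiv ℝ (∇ u) x (∇ u x), x - a⟫) := by
    rw [fderiv_fun_sub (by fun_prop) (by fun_prop), fderiv_const_mul hnorm,
      fderiv_fun_pow 2 hu_diff]
    simp [fderiv_norm_gradient_sq hu, inner_gradient_left]
  unfold rellichField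
  rw [divergence_add (by fun_prop) (by fun_prop), divergence_smul (by fun_prop) hgrad,
    divergence_smul (by fun_prop) (by fun_prop), divergence_gradient, divergence_sub_const,
    hcoeff_grad, hcoeff_radial]
  linear_combination -(2 * ⟪∇ u x, x - a⟫ + (Module.finrank ℝ E - 2) * u x) * heig

end Rellich

section Boundary

variable {E : Type*} [NormedAddCommGroup E] {n : ℕ}

lemma fderiv_sub_eq_zero_of_eqOn_zero {F : Type*} [NormedSpace ℝ E] [NormedAddCommGroup F]
    [NormedSpace ℝ F] {f : E → F} {s : Set E} {x y : E} (hs : Convex ℝ s)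
    (hf : DifferentiableAt ℝ f x) (hzero : Set.EqOn f 0 s) (hx : x ∈ s) (hy : y ∈ s) :
    fderiv ℝ f x (y - x) = 0 :=
  hf.hasFDerivAt.hasFDerivWithinAt.unique_on
    ((hasFDerivWithinAt_zero x s).congr hzero (hzero hx))
    (mem_tangentConeAt_of_segment_subset (hs.segment_subset hx hy))

lemma oppositeFacet_subset_frontier [NormedSpace ℝ E] (b : AffineBasis (Fin (n + 1)) ℝ E)
    (i : Fin (n + 1)) : oppositeFacet b i ⊆ frontier (convexHull ℝ (Set.range b)) := by
  intro x hx
  refine ⟨subset_closure (oppositeFacet_subset_convexHull_range b i hx), ?_⟩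
  rw [b.interior_convexHull]
  exact fun hpos => (hpos i).ne' (coord_eq_zero_of_mem_oppositeFacet b hx)

lemma apply_eq_coord_linear_mul_of_oppositeFacet [NormedSpace ℝ E]
    (b : AffineBasis (Fin (n + 1)) ℝ E) {i : Fin (n + 1)} {x : E} {A : E →L[ℝ] ℝ}
    (hA : ∀ y ∈ oppositeFacet b i, A (y - x) = 0) (v : E) :
    A v = (b.coord i).linear v * A (b i - x) := by
  conv_lhs => rw [← sum_coord_linear_smul_sub b v x]
  rw [map_sum, Finset.sum_eq_single_of_mem i (Finset.mem_univ i), map_smul, smul_eq_mul]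
  intro k _ hki
  rw [map_smul, hA _ (mem_oppositeFacet_of_ne b hki), smul_zero]

variable [InnerProductSpace ℝ E] [CompleteSpace E] {b : AffineBasis (Fin (n + 1)) ℝ E}
  {i : Fin (n + 1)} {u : E → ℝ} {x : E}

lemma inner_gradient_eq_coord_linear_mul (hu : DifferentiableAt ℝ u x)
    (hzero : Set.EqOn u 0 (oppositeFacet b i)) (hx : x ∈ oppositeFacet b i) (v : E) :
    ⟪∇ u x, v⟫ = (b.coord i).linear v * ⟪∇ u x, b i - x⟫ := by
  rw [inner_gradient_left, inner_gradient_left]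
  exact apply_eq_coord_linear_mul_of_oppositeFacet b (fun y hy =>
    fderiv_sub_eq_zero_of_eqOn_zero (convex_convexHull ℝ _) hu hzero hx hy) v

lemma coord_linear_rellichField (hu : DifferentiableAt ℝ u x)
    (hzero : Set.EqOn u 0 (oppositeFacet b i)) (hx : x ∈ oppositeFacet b i) (c : ℝ) (a : E) :
    (b.coord i).linear (rellichField c u a x) =
      c * ‖∇ u x‖ ^ 2 * (b.coord i).linear (x - a) := by
  have hnormal := inner_gradient_eq_coord_linear_mul hu hzero hx
  have hnorm : ‖∇ u x‖ ^ 2 = (b.coord i).linear (∇ u x) * ⟪∇ u x, b i - x⟫ := by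
    rw [← hnormal, real_inner_self_eq_norm_sq]
  have hux : u x = 0 := hzero hx
  rw [rellichField, map_add, map_smul, map_smul, smul_eq_mul, smul_eq_mul, hnormal (x - a), hux,
    hnorm]
  ring

lemma inner_gradient_normal_sq (hu : DifferentiableAt ℝ u x)
    (hzero : Set.EqOn u 0 (oppositeFacet b i)) (hx : x ∈ oppositeFacet b i) {ω : E}
    (hω_unit : ‖ω‖ = 1) (hω_orthogonal : ∀ y ∈ oppositeFacet b i, ⟪y - x, ω⟫ = 0) :
    ⟪∇ u x, ω⟫ ^ 2 = ‖∇ u x‖ ^ 2 := by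
  have hgrad := inner_gradient_eq_coord_linear_mul hu hzero hx
  have hnormal (v : E) : ⟪ω, v⟫ = (b.coord i).linear v * ⟪ω, b i - x⟫ :=
    apply_eq_coord_linear_mul_of_oppositeFacet b (A := innerSL ℝ ω)
      (fun y hy => (real_inner_comm _ _).trans (hω_orthogonal y hy)) v
  calc ⟪∇ u x, ω⟫ ^ 2 = ⟪∇ u x, ω⟫ * ⟪ω, ∇ u x⟫ := by rw [sq, real_inner_comm]
    _ = ⟪∇ u x, ∇ u x⟫ * ⟪ω, ω⟫ := by
        rw [hgrad ω, hnormal (∇ u x), hgrad (∇ u x), hnormal ω]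
        ring
    _ = ‖∇ u x‖ ^ 2 := by simp [hω_unit]

end Boundary

section Equidistribution

variable {E : Type*} [NormedAddCommGroup E] [InnerProductSpace ℝ E] [FiniteDimensional ℝ E]
  [MeasurableSpace E] [BorelSpace E] {n : ℕ} (b : AffineBasis (Fin (n + 2)) ℝ E)
  (μ : Measure E) [μ.IsAddHaarMeasure] {u : E → ℝ}

lemma setAverage_coord_linear_rellichField {i : Fin (n + 2)}
    (hu : ∀ x ∈ convexHull ℝ (Set.range b), DifferentiableAt ℝ u x)
    (hzero : Set.EqOn u 0 (oppositeFacet b i)) (c : ℝ) (j : Fin (n + 2)) :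
    ⨍ x in oppositeFacet b i, (b.coord i).linear (rellichField c u (b j) x) ∂μH[n] =
      if i = j then -⨍ x in oppositeFacet b j, c * ‖∇ u x‖ ^ 2 ∂μH[n] else 0 := by
  have hflux : ∀ x ∈ oppositeFacet b i, (b.coord i).linear (rellichField c u (b j) x) =
      if i = j then -(c * ‖∇ u x‖ ^ 2) else 0 := by
    intro x hx
    rw [coord_linear_rellichField (hu x (oppositeFacet_subset_convexHull_range b i hx)) hzero hx,
      coord_linear_sub, coord_eq_zero_of_mem_oppositeFacet b hx, b.coord_apply]
    split_ifs <;> simp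
  rw [setAverage_congr_fun (isCompact_oppositeFacet b i).measurableSet (ae_of_all _ hflux)]
  split_ifs with hij
  · rw [hij, setAverage_eq, setAverage_eq, integral_neg, smul_neg]
  · simp

lemma setAverage_norm_gradient_sq_oppositeFacet (h : ℝ)
    (hu : ∀ x ∈ convexHull ℝ (Set.range b), ContDiffAt ℝ 2 u x)
    (heig : ∀ x ∈ convexHull ℝ (Set.range b), -h ^ 2 * Δ u x = u x)
    (hdirichlet : ∀ x ∈ frontier (convexHull ℝ (Set.range b)), u x = 0) (j : Fin (n + 2)) :
    (n + 1) * ⨍ x in oppositeFacet b j, h ^ 2 * ‖∇ u x‖ ^ 2 ∂μH[n] =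
      2 * ⨍ x in convexHull ℝ (Set.range b), u x ^ 2 ∂μ := by
  have hV (x) (hx : x ∈ convexHull ℝ (Set.range b)) :
      ContDiffAt ℝ 1 (rellichField (h ^ 2) u (b j)) x := contDiffAt_rellichField (hu x hx) _ _
  have hdiv : ⨍ x in convexHull ℝ (Set.range b), divergence (rellichField (h ^ 2) u (b j)) x ∂μ =
      2 * ⨍ x in convexHull ℝ (Set.range b), u x ^ 2 ∂μ := by
    rw [setAverage_congr_fun ((Set.finite_range b).isCompact_convexHull ℝ).measurableSet
      (ae_of_all μ fun x hx => divergence_rellichField (hu x hx) (heig x hx) (b j)),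
      setAverage_eq, setAverage_eq, integral_const_mul, mul_smul_comm]
  have hflux (i : Fin (n + 2)) := setAverage_coord_linear_rellichField b
    (fun x hx => (hu x hx).differentiableAt two_ne_zero)
    (fun x hx => hdirichlet x (oppositeFacet_subset_frontier b i hx)) (h ^ 2) j
  rw [← hdiv, setAverage_divergence b μ (fun x hx => (hV x hx).differentiableAt one_ne_zero)
    fun x hx => ((hV x hx).continuousAt_fderiv one_ne_zero).continuousWithinAt]
  simp only [hflux, Finset.sum_ite_eq', Finset.mem_univ, if_true, neg_mul_neg]

theorem neumann_data_equidistribution_simplex_general (h : ℝ)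
    (hu : ∀ x ∈ convexHull ℝ (Set.range b), ContDiffAt ℝ 2 u x)
    (heig : ∀ x ∈ convexHull ℝ (Set.range b), -h ^ 2 * Δ u x = u x)
    (hdirichlet : ∀ x ∈ frontier (convexHull ℝ (Set.range b)), u x = 0) {j : Fin (n + 2)} {ω : E}
    (hω_unit : ‖ω‖ = 1)
    (hω_tangent : ∀ x ∈ oppositeFacet b j, ∀ y ∈ oppositeFacet b j, ⟪x - y, ω⟫ = 0) :
    ∫ x in oppositeFacet b j, (h * ⟪∇ u x, ω⟫) ^ 2 ∂μH[n] =
      2 * μH[n].real (oppositeFacet b j) / ((n + 1) * μ.real (convexHull ℝ (Set.range b))) *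
        ∫ x in convexHull ℝ (Set.range b), u x ^ 2 ∂μ := by
  have hnormal : ∀ x ∈ oppositeFacet b j, (h * ⟪∇ u x, ω⟫) ^ 2 = h ^ 2 * ‖∇ u x‖ ^ 2 := by
    intro x hx
    rw [mul_pow, inner_gradient_normal_sq
      ((hu x (oppositeFacet_subset_convexHull_range b j hx)).differentiableAt two_ne_zero)
      (fun y hy => hdirichlet y (oppositeFacet_subset_frontier b j hy)) hx hω_unit
      fun y hy => hω_tangent y hy x hx]
  have haverage : ⨍ x in oppositeFacet b j, h ^ 2 * ‖∇ u x‖ ^ 2 ∂μH[n] =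
      2 / (n + 1) * ⨍ x in convexHull ℝ (Set.range b), u x ^ 2 ∂μ := by
    rw [div_mul_eq_mul_div, ← setAverage_norm_gradient_sq_oppositeFacet b μ h hu heig hdirichlet j,
      mul_div_cancel_left₀ _ n.cast_add_one_ne_zero]
  calc ∫ x in oppositeFacet b j, (h * ⟪∇ u x, ω⟫) ^ 2 ∂μH[n]
      = ∫ x in oppositeFacet b j, h ^ 2 * ‖∇ u x‖ ^ 2 ∂μH[n] :=
        setIntegral_congr_fun (isCompact_oppositeFacet b j).measurableSet hnormal
    _ = μH[n].real (oppositeFacet b j) *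
          ⨍ x in oppositeFacet b j, h ^ 2 * ‖∇ u x‖ ^ 2 ∂μH[n] :=
        (measure_smul_setAverage _ (hausdorffMeasure_oppositeFacet_ne_top b.ind j)).symm
    _ = _ := by
        rw [haverage, setAverage_eq, smul_eq_mul]
        field_simp

end Equidistribution

lemma lap_eq_laplacian {n : ℕ} {u : EuclideanSpace ℝ (Fin n) → ℝ} {x : EuclideanSpace ℝ (Fin n)}
    (hu : ContDiffAt ℝ 2 u x) : lap u x = Δ u x := by
  have hderiv : DifferentiableAt ℝ (fderiv ℝ u) x :=
    (hu.fderiv_right (m := 1) le_rfl).differentiableAt one_ne_zero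
  rw [InnerProductSpace.laplacian_eq_iteratedFDeriv_orthonormalBasis u
    (EuclideanSpace.basisFun (Fin n) ℝ)]
  simp [lap, iteratedFDeriv_two_apply, fderiv_clm_apply hderiv (differentiableAt_const _)]

/-- **Equidistribution of Neumann data mass on simplices.**
Let `T ⊆ ℝⁿ` (`n ≥ 2`) be a nondegenerate simplex with vertices `p 0, …, p n`,
faces `G j = conv {p i : i ≠ j}` with outward unit normals `ω j`, and let `u` be a
normalized Dirichlet eigenfunction: `-h²Δu = u` on `T`, `u = 0` on `∂T`, `∫_T u² = 1`.
Then for every face, `∫_{G j} |h ∂_{ω j} u|² dS = 2 Vol_{n-1}(G j) / (n Vol_n(T))`. -/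
theorem neumann_data_equidistribution_simplex
    (n : ℕ) (hn : 2 ≤ n)
    (p : Fin (n + 1) → EuclideanSpace ℝ (Fin n))
    (hp : AffineIndependent ℝ p)
    (T : Set (EuclideanSpace ℝ (Fin n)))
    (hT : T = convexHull ℝ (Set.range p))
    (G : Fin (n + 1) → Set (EuclideanSpace ℝ (Fin n)))
    (hG : ∀ j, G j = convexHull ℝ (p '' {i | i ≠ j}))
    (ω : Fin (n + 1) → EuclideanSpace ℝ (Fin n))
    (hω_unit : ∀ j, ‖ω j‖ = 1)
    (hω_tangent : ∀ j, ∀ x ∈ G j, ∀ y ∈ G j, ⟪x - y, ω j⟫ = 0)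
    (hω_outward : ∀ j, ∀ x ∈ G j, ⟪p j - x, ω j⟫ < 0)
    (h : ℝ) (hh : 0 < h)
    (u : EuclideanSpace ℝ (Fin n) → ℝ)
    (U : Set (EuclideanSpace ℝ (Fin n))) (hU : IsOpen U) (hTU : T ⊆ U)
    (hsmooth : ContDiffOn ℝ (⊤ : ℕ∞) u U)
    (heig : ∀ x ∈ T, -h ^ 2 * lap u x = u x)
    (hdirichlet : ∀ x ∈ frontier T, u x = 0)
    (hnorm : ∫ x in T, (u x) ^ 2 = 1) :
    ∀ j, ∫ x in G j, (h * ⟪gradient u x, ω j⟫) ^ 2 ∂(μH[(n - 1 : ℝ)]) =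
      2 * (μH[(n - 1 : ℝ)] (G j)).toReal / (n * (volume T).toReal) := by
  intro j
  obtain ⟨m, rfl⟩ : ∃ m, n = m + 1 := ⟨n - 1, by lia⟩
  let b : AffineBasis (Fin (m + 2)) ℝ (EuclideanSpace ℝ (Fin (m + 1))) :=
    ⟨p, hp, hp.affineSpan_eq_top_iff_card_eq_finrank_add_one.2 (by simp)⟩
  have hu : ∀ x ∈ T, ContDiffAt ℝ 2 u x := fun x hx =>
    (hsmooth.contDiffAt (hU.mem_nhds (hTU hx))).of_le (by norm_cast)
  have hsimplex : T = convexHull ℝ (Set.range b) := hT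
  have hfacet : G j = oppositeFacet b j := hG j
  have hdim : ((m + 1 : ℕ) : ℝ) - 1 = m := by simp
  rw [hdim, hfacet, neumann_data_equidistribution_simplex_general b volume h (hsimplex ▸ hu)
    (hsimplex ▸ fun x hx => lap_eq_laplacian (hu x hx) ▸ heig x hx) (hsimplex ▸ hdirichlet)
    (hω_unit j) (hfacet ▸ hω_tangent j), ← hsimplex, hnorm, mul_one, Nat.cast_succ]
  rfl
end

section
/- There exists an invertible 3×3 real matrix B such that |Bᵀe₁|² = |Bᵀe₂|² = |Bᵀe₃|² = 1 and |Bᵀ(1,1,1)ᵀ|² = 3, but B Bᵀ ≠ I. (Consequently, in dimension 3 the quantities νᵀ(BBᵀ)ν for the four outward unit normals ν of the standard simplex do not determine the matrix Γ = BBᵀ, so the norms of the Neumann data of eigenfunctions of the associated constant-coefficient elliptic operator do not determine the operator.) -/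
/-!
Replace row `i` of the identity by a unit vector `v` whose coordinates other than `i` sum to zero.
All rows are still unit vectors, and their sum `u = (1, …, 1) + (v - eᵢ)` satisfies
`|u|² = n + 2 (∑ v - 1) + (2 - 2 vᵢ) = n`. The determinant is `vᵢ`, while the inner product of the
rows `i` and `j ≠ i` is `vⱼ`. With three distinct indices, `v = (eᵢ + 2 eⱼ - 2 eₖ) / 3` has
`vᵢ ≠ 0` and `vⱼ ≠ 0`.
-/

open Matrix

section UpdateRow

variable {n R : Type*} [Fintype n] [DecidableEq n] [CommRing R] {i j : n} {v : n → R}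

theorem det_one_updateRow (i : n) (v : n → R) : ((1 : Matrix n n R).updateRow i v).det = v i := by
  rw [← cramer_transpose_apply, transpose_one, cramer_one, Module.End.one_apply]

theorem sum_sq_transpose_one_updateRow_mulVec_single (hv : ∑ k, v k ^ 2 = 1) (j : n) :
    ∑ k, (((1 : Matrix n n R).updateRow i v)ᵀ *ᵥ Pi.single j 1) k ^ 2 = 1 := by
  rw [mulVec_single_one]
  obtain rfl | hji := eq_or_ne j i
  · simpa using hv
  · simp [hji, one_apply]

theorem transpose_one_updateRow_mulVec_one (i : n) (v : n → R) :
    ((1 : Matrix n n R).updateRow i v)ᵀ *ᵥ 1 = 1 + (v - Pi.single i 1) := by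
  have updateRow_eq_add :
      (1 : Matrix n n R).updateRow i v = 1 + vecMulVec (Pi.single i 1) (v - Pi.single i 1) := by
    ext a b
    obtain rfl | hai := eq_or_ne a i
    · simp [vecMulVec_apply, one_eq_pi_single]
    · simp [vecMulVec_apply, hai]
  simp [updateRow_eq_add, transpose_vecMulVec, add_mulVec, vecMulVec_mulVec]

theorem sum_sq_sub_single (i : n) (v : n → R) :
    ∑ k, (v - Pi.single i 1 : n → R) k ^ 2 = ∑ k, v k ^ 2 - 2 * v i + 1 := by
  simp [sub_sq, Finset.sum_add_distrib, Pi.single_apply]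

theorem sum_sq_transpose_one_updateRow_mulVec_one (hv : ∑ k, v k ^ 2 = 1)
    (hsum : ∑ k, v k = v i) :
    ∑ k, (((1 : Matrix n n R).updateRow i v)ᵀ *ᵥ 1) k ^ 2 = Fintype.card n := by
  set w := v - Pi.single i 1 with hw
  have sum_w : ∑ k, w k = v i - 1 := by simp [hw, hsum]
  calc
    _ = ∑ k, (1 + w k) ^ 2 := by simp [transpose_one_updateRow_mulVec_one, hw]
    _ = Fintype.card n + 2 * ∑ k, w k + ∑ k, w k ^ 2 := by
      simp [add_sq, Finset.sum_add_distrib, Finset.mul_sum]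
    _ = Fintype.card n := by
      rw [sum_w, hw, sum_sq_sub_single, hv]
      ring

theorem one_updateRow_mul_transpose_apply_of_ne (hji : j ≠ i) (v : n → R) :
    ((1 : Matrix n n R).updateRow i v * ((1 : Matrix n n R).updateRow i v)ᵀ) i j = v j := by
  simp [mul_apply, hji, one_apply]

end UpdateRow

theorem exists_sum_sq_eq_one_sum_eq_apply {n K : Type*} [Fintype n] [Field K]
    (h2 : (2 : K) ≠ 0) (h3 : (3 : K) ≠ 0) {i j k : n} (hij : i ≠ j) (hik : i ≠ k) (hjk : j ≠ k) :
    ∃ v : n → K, ∑ l, v l ^ 2 = 1 ∧ ∑ l, v l = v i ∧ v i ≠ 0 ∧ v j ≠ 0 := by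
  classical
  let v : n → K := Pi.single i (1 / 3) + Pi.single j (2 / 3) + Pi.single k (-2 / 3)
  have v_i : v i = 1 / 3 := by simp [v, hij, hik]
  have v_j : v j = 2 / 3 := by simp [v, hij.symm, hjk]
  have v_k : v k = -2 / 3 := by simp [v, hik.symm, hjk.symm]
  refine ⟨v, ?_, ?_, by simp [v_i, h3], by simp [v_j, h2, h3]⟩
  · calc
      ∑ l, v l ^ 2 = v ⬝ᵥ v := by simp only [dotProduct, sq]
      _ = v i * (1 / 3) + v j * (2 / 3) + v k * (-2 / 3) := by
        conv_lhs => arg 2; unfold v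
        simp only [dotProduct_add, dotProduct_single]
      _ = 1 := by
        rw [v_i, v_j, v_k]
        field_simp
        norm_num
  · rw [v_i]
    simp only [v, Pi.add_apply, Finset.sum_add_distrib, Finset.sum_pi_single', Finset.mem_univ,
      if_true]
    ring

theorem exists_matrix_neumann_data_not_determining_general {n K : Type*} [Fintype n]
    [DecidableEq n] [Field K] (h2 : (2 : K) ≠ 0) (h3 : (3 : K) ≠ 0) (hn : 2 < Fintype.card n) :
    ∃ B : Matrix n n K, IsUnit B.det ∧
      (∀ i, ∑ k, (Bᵀ *ᵥ Pi.single i 1) k ^ 2 = 1) ∧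
      (∑ k, (Bᵀ *ᵥ fun _ => 1) k ^ 2 = Fintype.card n) ∧
      B * Bᵀ ≠ 1 := by
  obtain ⟨i, j, k, hij, hik, hjk⟩ := Fintype.two_lt_card_iff.mp hn
  obtain ⟨v, hv, hsum, hvi, hvj⟩ := exists_sum_sq_eq_one_sum_eq_apply h2 h3 hij hik hjk
  refine ⟨(1 : Matrix n n K).updateRow i v, ?_,
    sum_sq_transpose_one_updateRow_mulVec_single hv,
    sum_sq_transpose_one_updateRow_mulVec_one hv hsum, fun gram_eq_one => hvj ?_⟩
  · rw [det_one_updateRow]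
    exact hvi.isUnit
  · rw [← one_updateRow_mul_transpose_apply_of_ne hij.symm v, gram_eq_one, one_apply_ne hij]

/-- **Non-uniqueness in dimension 3.**  There is an invertible `3×3` real matrix `B` with
`|Bᵀe₁|² = |Bᵀe₂|² = |Bᵀe₃|² = 1` and `|Bᵀ(1,1,1)ᵀ|² = 3`, yet `BBᵀ ≠ I`: the quadratic
form values `νᵀ(BBᵀ)ν` at the four outward unit normals of the standard simplex do not
determine `Γ = BBᵀ`. -/
theorem exists_matrix_neumann_data_not_determining :
    ∃ B : Matrix (Fin 3) (Fin 3) ℝ, IsUnit B.det ∧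
      (∀ i, ∑ k, (B.transpose.mulVec (Pi.single i 1)) k ^ 2 = 1) ∧
      (∑ k, (B.transpose.mulVec (fun _ => 1)) k ^ 2 = 3) ∧
      B * B.transpose ≠ 1 := by
  simpa using exists_matrix_neumann_data_not_determining_general (n := Fin 3) (K := ℝ)
    two_ne_zero three_ne_zero (by simp)
end

section
/- Let 0 < ε < 1, set d = (−3ε(1 − ε²)^{1/2} − ε²)/((1 − ε²)^{1/2} + ε), and suppose d² + ε² ≤ 1; set a = (1 − d² − ε²)^{1/2}. Define the 3×3 matrix B by Bᵀ = [[a, 0, 0], [d, (1 − ε²)^{1/2}, ε], [ε, ε, (1 − ε²)^{1/2}]]. Then |Bᵀe₁|² = 1, |Bᵀe₂|² = 1, |Bᵀe₃|² = 1, and |Bᵀ(1,1,1)ᵀ|² = 3. -/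
/-!
The squared norms `|Bᵀeᵢ|²` are the diagonal entries of the Gram matrix of the columns of `Bᵀ`, and
`|Bᵀ(1,1,1)ᵀ|²` is the sum of all its entries. With `s = √(1 - ε²)`, the choice of `a` and `s` makes
the diagonal entries `1`, and `d` solves the linear equation `d (s + ε) + 3 ε s + ε² = 0`, which
says that the three pairwise inner products of the columns add up to `0`.
-/

open Matrix

section Gram

variable {m n R : Type*} [Fintype m] [Fintype n] [CommSemiring R]

theorem sum_sq_mulVec_eq_dotProduct_gram (A : Matrix m n R) (v : n → R) :
    ∑ k, (A *ᵥ v) k ^ 2 = v ⬝ᵥ (Aᵀ * A) *ᵥ v := by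
  rw [← mulVec_mulVec, dotProduct_mulVec, vecMul_transpose]
  simp only [dotProduct, sq]

theorem sum_sq_mulVec_single_one [DecidableEq n] (A : Matrix m n R) (i : n) :
    ∑ k, (A *ᵥ Pi.single i 1) k ^ 2 = (Aᵀ * A) i i := by
  rw [sum_sq_mulVec_eq_dotProduct_gram, mulVec_single_one, single_one_dotProduct, col_apply]

theorem sum_sq_mulVec_one (A : Matrix m n R) :
    ∑ k, (A *ᵥ fun _ => 1) k ^ 2 = ∑ i, ∑ j, (Aᵀ * A) i j := by
  rw [sum_sq_mulVec_eq_dotProduct_gram]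
  simp only [dotProduct, mulVec, one_mul, mul_one]

end Gram

section ExampleMatrix

variable {R : Type*}

/-- The matrix `Bᵀ` of the example, with its entries as free parameters: `s` stands for
`(1 - ε²)^{1/2}`, and the values of `a`, `d` and `s` enter only through polynomial relations. -/
def exampleMatrix [Zero R] (a d s ε : R) : Matrix (Fin 3) (Fin 3) R :=
  !![a, 0, 0; d, s, ε; ε, ε, s]

variable [CommRing R] {a d s ε : R}

theorem exampleMatrix_gram (ha : a ^ 2 + d ^ 2 + ε ^ 2 = 1) (hs : s ^ 2 + ε ^ 2 = 1) :
    (exampleMatrix a d s ε)ᵀ * exampleMatrix a d s ε =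
      !![1, d * s + ε ^ 2, d * ε + ε * s;
         d * s + ε ^ 2, 1, 2 * ε * s;
         d * ε + ε * s, 2 * ε * s, 1] := by
  ext i j
  fin_cases i <;> fin_cases j <;>
    simp [exampleMatrix, mul_apply, Fin.sum_univ_three] <;> grind

theorem sum_sq_exampleMatrix_mulVec_single_one (ha : a ^ 2 + d ^ 2 + ε ^ 2 = 1)
    (hs : s ^ 2 + ε ^ 2 = 1) (i : Fin 3) :
    ∑ k, (exampleMatrix a d s ε *ᵥ Pi.single i 1) k ^ 2 = 1 := by
  rw [sum_sq_mulVec_single_one, exampleMatrix_gram ha hs]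
  fin_cases i <;> rfl

theorem sum_sq_exampleMatrix_mulVec_one (ha : a ^ 2 + d ^ 2 + ε ^ 2 = 1)
    (hs : s ^ 2 + ε ^ 2 = 1) :
    ∑ k, (exampleMatrix a d s ε *ᵥ fun _ => 1) k ^ 2 =
      3 + 2 * (d * (s + ε) + 3 * ε * s + ε ^ 2) := by
  rw [sum_sq_mulVec_one, exampleMatrix_gram ha hs]
  simp only [Fin.sum_univ_three, of_apply, cons_val]
  ring

end ExampleMatrix

theorem explicit_example_dim3_general
    (ε : ℝ) (hε : Real.sqrt (1 - ε ^ 2) + ε ≠ 0)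
    (d : ℝ)
    (hd : d = (-3 * ε * Real.sqrt (1 - ε ^ 2) - ε ^ 2) / (Real.sqrt (1 - ε ^ 2) + ε))
    (hde : d ^ 2 + ε ^ 2 ≤ 1)
    (a : ℝ) (ha : a = Real.sqrt (1 - d ^ 2 - ε ^ 2))
    (B : Matrix (Fin 3) (Fin 3) ℝ)
    (hB : B.transpose = exampleMatrix a d (Real.sqrt (1 - ε ^ 2)) ε) :
    (∀ i, ∑ k, (B.transpose.mulVec (Pi.single i 1)) k ^ 2 = 1) ∧
      ∑ k, (B.transpose.mulVec (fun _ => 1)) k ^ 2 = 3 := by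
  have s_sq : Real.sqrt (1 - ε ^ 2) ^ 2 + ε ^ 2 = 1 := by
    rw [Real.sq_sqrt (by linarith [sq_nonneg d])]
    ring
  have a_sq : a ^ 2 + d ^ 2 + ε ^ 2 = 1 := by
    rw [ha, Real.sq_sqrt (by linarith)]
    ring
  have inner_sum_zero :
      d * (Real.sqrt (1 - ε ^ 2) + ε) + 3 * ε * Real.sqrt (1 - ε ^ 2) + ε ^ 2 = 0 := by
    rw [hd, div_mul_cancel₀ _ hε]
    ring
  rw [hB]
  refine ⟨sum_sq_exampleMatrix_mulVec_single_one a_sq s_sq, ?_⟩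
  rw [sum_sq_exampleMatrix_mulVec_one a_sq s_sq, inner_sum_zero, mul_zero, add_zero]

/-- **The explicit 3-dimensional example.**  For `0 < ε < 1`, with
`d = (−3ε√(1−ε²) − ε²)/(√(1−ε²) + ε)` (assuming `d² + ε² ≤ 1`) and
`a = √(1 − d² − ε²)`, the matrix `B` with
`Bᵀ = [[a,0,0],[d,√(1−ε²),ε],[ε,ε,√(1−ε²)]]` satisfies
`|Bᵀe₁|² = |Bᵀe₂|² = |Bᵀe₃|² = 1` and `|Bᵀ(1,1,1)ᵀ|² = 3`. -/
theorem explicit_example_dim3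
    (ε : ℝ) (hε0 : 0 < ε) (hε1 : ε < 1)
    (d : ℝ)
    (hd : d = (-3 * ε * Real.sqrt (1 - ε ^ 2) - ε ^ 2) / (Real.sqrt (1 - ε ^ 2) + ε))
    (hde : d ^ 2 + ε ^ 2 ≤ 1)
    (a : ℝ) (ha : a = Real.sqrt (1 - d ^ 2 - ε ^ 2))
    (B : Matrix (Fin 3) (Fin 3) ℝ)
    (hB : B.transpose = !![a, 0, 0;
                           d, Real.sqrt (1 - ε ^ 2), ε;
                           ε, ε, Real.sqrt (1 - ε ^ 2)]) :
    (∀ i, ∑ k, (B.transpose.mulVec (Pi.single i 1)) k ^ 2 = 1) ∧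
      ∑ k, (B.transpose.mulVec (fun _ => 1)) k ^ 2 = 3 := by
  exact explicit_example_dim3_general ε (by positivity) d hd hde a ha B hB
end
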